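/- Let G be a finite group, k a commutative Noetherian ring, and M a finitely generated kG-module. If the projective dimension of M over kG is finite, then pd_{kG}(M) = pd_k(M). -/

import Mathlib

open CategoryTheory CategoryTheory.Limits

/-- `pdLE n M` : `M` has projective dimension `≤ n`. -/
noncomputable def pdLE {C : Type*} [Category C] [Abelian C] : ℕ → C → Prop
  | 0, M => Projective M
  | n + 1, M => ∃ (P : C) (f : P ⟶ M), Projective P ∧ Epi f ∧ pdLE n (kernel f)

/-!
Restriction from `kG` to `k` is exact and preserves projectives, so it does not raise projective
dimension. Conversely, by shifting dimensions along `0 → K → P → X → 0` it is enough to see that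
`X` is projective if it has projective dimension at most one over `kG` and is projective over `k`.
In that case `K` is projective and `K → P` splits over `k`. If `φ : K → K` is `k`-linear of trace
`∑ g, g⁻¹ φ g` equal to the identity (on `kG`, take `φ` to be `a ↦ a₁ • 1`), the trace of `φ` after
a `k`-linear retraction of `K → P` is a `kG`-linear retraction, and `X` is a summand of `P`.
-/

section AbelianCategory

variable {C : Type*} [Category C] [Abelian C]

theorem shortExact_kernel {X Y : C} (f : X ⟶ Y) [Epi f] :
    (ShortComplex.mk (kernel.ι f) f (kernel.condition f)).ShortExact :=
  { exact := ShortComplex.exact_kernel f }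

theorem pdLE_iff_hasProjectiveDimensionLE [EnoughProjectives C] (n : ℕ) (X : C) :
    pdLE n X ↔ HasProjectiveDimensionLE X n := by
  induction n generalizing X with
  | zero => exact projective_iff_hasProjectiveDimensionLE_zero X
  | succ n ih =>
    constructor
    · rintro ⟨P, f, hP, _, hker⟩
      exact ((shortExact_kernel f).hasProjectiveDimensionLT_X₃_iff n hP).2 ((ih _).1 hker)
    · intro hX
      have hP : Projective (Projective.over X) := inferInstance
      exact ⟨_, Projective.π X, hP, inferInstance, (ih _).2 <|
        ((shortExact_kernel (Projective.π X)).hasProjectiveDimensionLT_X₃_iff n hP).1 hX⟩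

theorem projective_X₃_of_isSplitMono_f {S : ShortComplex C}
    (hS : S.ShortExact) [Projective S.X₂] [IsSplitMono S.f] : Projective S.X₃ :=
  let σ := ShortComplex.Splitting.ofExactOfRetraction S hS.exact (retraction S.f)
    (IsSplitMono.id S.f) hS.epi_g
  (Retract.mk σ.s S.g σ.s_g).projective

variable {D : Type*} [Category D]

/-- An object `I` is injective relative to a functor `F` if every morphism out of `I` that becomes
a split monomorphism under `F` is already a split monomorphism. -/
def IsRelativelyInjective (F : C ⥤ D) (I : C) : Prop :=
  ∀ ⦃X : C⦄ (i : I ⟶ X), IsSplitMono (F.map i) → IsSplitMono i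

variable [Abelian D] [EnoughProjectives C] (F : C ⥤ D) [F.Additive] [PreservesFiniteLimits F]
  [PreservesFiniteColimits F]

variable {F} in
theorem IsRelativelyInjective.projective_of_projective_obj
    (hF : ∀ P : C, Projective P → IsRelativelyInjective F P) {X : C}
    (hX : HasProjectiveDimensionLE X 1) (hFX : Projective (F.obj X)) : Projective X := by
  let S := ShortComplex.mk (kernel.ι (Projective.π X)) _ (kernel.condition _)
  have hS : S.ShortExact := shortExact_kernel _
  have : Projective S.X₂ := inferInstanceAs (Projective (Projective.over X))
  have hK : Projective S.X₁ := (projective_iff_hasProjectiveDimensionLE_zero _).2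
    ((hS.hasProjectiveDimensionLT_X₃_iff 0 this).1 hX)
  have : Projective (S.map F).X₃ := hFX
  have : IsSplitMono S.f := hF _ hK S.f (hS.map_of_exact F).splittingOfProjective.isSplitMono_f
  exact projective_X₃_of_isSplitMono_f hS

variable [F.PreservesProjectiveObjects]

theorem hasProjectiveDimensionLE_obj {n : ℕ} {X : C} (hX : HasProjectiveDimensionLE X n) :
    HasProjectiveDimensionLE (F.obj X) n := by
  induction n generalizing X with
  | zero =>
    have := (projective_iff_hasProjectiveDimensionLE_zero X).2 hX
    exact (projective_iff_hasProjectiveDimensionLE_zero _).1 (F.projective_obj X)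
  | succ n ih =>
    have hS := shortExact_kernel (Projective.π X)
    have hP : Projective (Projective.over X) := inferInstance
    exact ((hS.map_of_exact F).hasProjectiveDimensionLT_X₃_iff n (F.projective_obj _)).2
      (ih ((hS.hasProjectiveDimensionLT_X₃_iff n hP).1 hX))

variable {F}

theorem IsRelativelyInjective.hasProjectiveDimensionLE_of_succ
    (hF : ∀ P : C, Projective P → IsRelativelyInjective F P) {n : ℕ} {X : C}
    (hX : HasProjectiveDimensionLE X (n + 1)) (hFX : HasProjectiveDimensionLE (F.obj X) n) :
    HasProjectiveDimensionLE X n := by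
  induction n generalizing X with
  | zero =>
    rw [← projective_iff_hasProjectiveDimensionLE_zero] at hFX ⊢
    exact projective_of_projective_obj hF hX hFX
  | succ n ih =>
    have hS := shortExact_kernel (Projective.π X)
    have hP : Projective (Projective.over X) := inferInstance
    refine (hS.hasProjectiveDimensionLT_X₃_iff n hP).2 (ih ?_ ?_)
    · exact (hS.hasProjectiveDimensionLT_X₃_iff (n + 1) hP).1 hX
    · exact ((hS.map_of_exact F).hasProjectiveDimensionLT_X₃_iff n (F.projective_obj _)).1 hFX

theorem IsRelativelyInjective.hasProjectiveDimensionLE_obj_iff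
    (hF : ∀ P : C, Projective P → IsRelativelyInjective F P) {m : ℕ} {X : C}
    (hX : HasProjectiveDimensionLE X m) (n : ℕ) :
    HasProjectiveDimensionLE (F.obj X) n ↔ HasProjectiveDimensionLE X n := by
  refine ⟨fun hFX => ?_, hasProjectiveDimensionLE_obj F⟩
  induction m with
  | zero => exact hasProjectiveDimensionLT_of_ge X 1 (n + 1) (by lia)
  | succ m ih =>
    rcases le_or_gt n m with hnm | hmn
    · exact ih (hasProjectiveDimensionLE_of_succ hF hX
        (hasProjectiveDimensionLT_of_ge _ (n + 1) (m + 1) (by lia)))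
    · exact hasProjectiveDimensionLT_of_ge X (m + 2) (n + 1) (by lia)

end AbelianCategory

theorem projective_restrictScalars (R A M : Type*) [CommSemiring R] [Semiring A]
    [Algebra R A] [AddCommMonoid M] [Module A M] [Module R M] [IsScalarTower R A M]
    [Module.Projective R A] [Module.Projective A M] : Module.Projective R M := by
  classical
  obtain ⟨σ, hσ⟩ := Module.projective_def'.1 ‹Module.Projective A M›
  have : Module.Projective R (M →₀ A) :=
    .of_equiv (finsuppLequivDFinsupp (ι := M) (M := A) R).symm
  exact .of_split (σ.restrictScalars R) ((Finsupp.linearCombination A id).restrictScalars R)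
    (congrArg (LinearMap.restrictScalars R) hσ)

section Trace

open scoped MonoidAlgebra

variable {k G U V W : Type*} [CommRing k] [Group G] [Fintype G]
  [AddCommGroup U] [Module k U] [Module k[G] U] [IsScalarTower k k[G] U]
  [AddCommGroup V] [Module k V] [Module k[G] V] [IsScalarTower k k[G] V]
  [AddCommGroup W] [Module k W] [Module k[G] W] [IsScalarTower k k[G] W]

theorem sumOfConjugatesEquivariant_comp_restrictScalars (φ : V →ₗ[k] W)
    (f : U →ₗ[k[G]] V) :
    (φ ∘ₗ f.restrictScalars k).sumOfConjugatesEquivariant G =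
      φ.sumOfConjugatesEquivariant G ∘ₗ f := by
  ext x
  simp [LinearMap.sumOfConjugatesEquivariant_apply, LinearMap.conjugate_apply]

theorem sumOfConjugatesEquivariant_restrictScalars_comp (f : V →ₗ[k[G]] W)
    (φ : U →ₗ[k] V) :
    (f.restrictScalars k ∘ₗ φ).sumOfConjugatesEquivariant G =
      f ∘ₗ φ.sumOfConjugatesEquivariant G := by
  ext x
  simp [LinearMap.sumOfConjugatesEquivariant_apply, LinearMap.conjugate_apply]

variable (k G V) in
/-- Higman's criterion for relative projectivity: the identity of `V` is the trace
`∑ g, g⁻¹ φ g` of a `k`-linear endomorphism `φ`. -/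
def HigmanCriterion : Prop :=
  ∃ φ : V →ₗ[k] V, φ.sumOfConjugatesEquivariant G = LinearMap.id

theorem HigmanCriterion.of_split (hV : HigmanCriterion k G V) (i : U →ₗ[k[G]] V)
    (p : V →ₗ[k[G]] U) (hpi : p ∘ₗ i = LinearMap.id) : HigmanCriterion k G U := by
  obtain ⟨φ, hφ⟩ := hV
  refine ⟨p.restrictScalars k ∘ₗ φ ∘ₗ i.restrictScalars k, ?_⟩
  rw [sumOfConjugatesEquivariant_restrictScalars_comp,
    sumOfConjugatesEquivariant_comp_restrictScalars, hφ, LinearMap.id_comp, hpi]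

theorem HigmanCriterion.finsupp (ι : Type*) (hV : HigmanCriterion k G V) :
    HigmanCriterion k G (ι →₀ V) := by
  obtain ⟨φ, hφ⟩ := hV
  refine ⟨Finsupp.mapRange.linearMap φ, LinearMap.ext fun u => Finsupp.ext fun j => ?_⟩
  simpa [LinearMap.sumOfConjugatesEquivariant_apply, LinearMap.conjugate_apply,
    Finsupp.finsetSum_apply] using LinearMap.congr_fun hφ (u j)

variable (k G) in
theorem higmanCriterion_monoidAlgebra : HigmanCriterion k G k[G] := by
  refine ⟨MonoidAlgebra.lsingle 1 ∘ₗ Finsupp.lapply 1 ∘ₗ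
    (MonoidAlgebra.coeffLinearEquiv k).toLinearMap, LinearMap.ext fun a => ?_⟩
  rw [LinearMap.sumOfConjugatesEquivariant_apply]
  calc ∑ g : G, MonoidAlgebra.single g⁻¹ (1 : k) *
        MonoidAlgebra.single 1 ((MonoidAlgebra.single g (1 : k) * a).coeff 1)
      = ∑ g : G, MonoidAlgebra.single g⁻¹ (a.coeff g⁻¹) := by
        simp [MonoidAlgebra.single_mul_single, MonoidAlgebra.coeff_single_mul_apply]
    _ = ∑ g : G, MonoidAlgebra.single g (a.coeff g) :=
      Equiv.sum_comp (Equiv.inv G) fun g => MonoidAlgebra.single g (a.coeff g)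
    _ = a := by
      rw [← Finsupp.sum_fintype _ _ fun _ => MonoidAlgebra.single_zero _, a.sum_coeff_single]

variable (k G V) in
theorem higmanCriterion_of_projective [Module.Projective k[G] V] :
    HigmanCriterion k G V := by
  obtain ⟨σ, hσ⟩ := Module.projective_def'.1 ‹Module.Projective k[G] V›
  exact ((higmanCriterion_monoidAlgebra k G).finsupp V).of_split σ _ hσ

theorem HigmanCriterion.exists_leftInverse (hV : HigmanCriterion k G V)
    (i : V →ₗ[k[G]] W) (s : W →ₗ[k] V)
    (hs : s ∘ₗ i.restrictScalars k = LinearMap.id) :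
    ∃ t : W →ₗ[k[G]] V, t ∘ₗ i = LinearMap.id := by
  obtain ⟨φ, hφ⟩ := hV
  refine ⟨(φ ∘ₗ s).sumOfConjugatesEquivariant G, ?_⟩
  rw [← sumOfConjugatesEquivariant_comp_restrictScalars, LinearMap.comp_assoc, hs,
    LinearMap.comp_id, hφ]

end Trace

universe u v w

section ModuleCat

open scoped MonoidAlgebra

instance preservesFiniteLimits_restrictScalars {R S : Type*} [Ring R] [Ring S] (f : R →+* S) :
    PreservesFiniteLimits (ModuleCat.restrictScalars.{w} f) where
  preservesFiniteLimits _ := { }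

instance preservesFiniteColimits_restrictScalars {R S : Type*} [Ring R] [Ring S] (f : R →+* S) :
    PreservesFiniteColimits (ModuleCat.restrictScalars.{w} f) where
  preservesFiniteColimits _ := { }

theorem preservesProjectiveObjects_restrictScalars (R A : Type*) [CommRing R] [Ring A]
    [Algebra R A] [Module.Projective R A] [Small.{w} A] :
    (ModuleCat.restrictScalars.{w} (algebraMap R A)).PreservesProjectiveObjects where
  projective_obj {X} _ := by
    let : Module R X := Module.restrictScalars R A X
    have : IsScalarTower R A X := .restrictScalars R A X
    have : Module.Projective R ((ModuleCat.restrictScalars (algebraMap R A)).obj X) :=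
      projective_restrictScalars R A X
    infer_instance

/-- For a module `M` over an `R`-algebra `A` with a compatible `R`-action, the restriction of `M`
to `R` is `M` with that action. -/
noncomputable def restrictScalarsObjIso (R A : Type*) (M : Type w) [CommRing R] [Ring A]
    [Algebra R A] [AddCommGroup M] [Module R M] [Module A M] [IsScalarTower R A M] :
    (ModuleCat.restrictScalars (algebraMap R A)).obj (ModuleCat.of A M) ≅ ModuleCat.of R M :=
  let e : (ModuleCat.restrictScalars (algebraMap R A)).obj (ModuleCat.of A M) ≃ₗ[R]
      ModuleCat.of R M :=
    { AddEquiv.refl M with map_smul' := fun r x => algebraMap_smul A r (show M from x) }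
  e.toModuleIso

variable {k : Type u} [CommRing k] {G : Type v} [Group G] [Finite G]

theorem isRelativelyInjective_restrictScalars_of_projective
    (P : ModuleCat.{w} k[G]) [Module.Projective k[G] P] :
    IsRelativelyInjective (ModuleCat.restrictScalars (algebraMap k k[G])) P := by
  intro X i hi
  have := Fintype.ofFinite G
  let : Module k P := Module.restrictScalars k k[G] P
  let : Module k X := Module.restrictScalars k k[G] X
  have : IsScalarTower k k[G] P := .restrictScalars k k[G] P
  have : IsScalarTower k k[G] X := .restrictScalars k k[G] X
  obtain ⟨⟨r, hr⟩⟩ := hi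
  obtain ⟨t, ht⟩ := (higmanCriterion_of_projective k G P).exists_leftInverse i.hom
    (show X →ₗ[k] P from r.hom) (congrArg ModuleCat.Hom.hom hr)
  exact ⟨⟨ModuleCat.ofHom t, ModuleCat.hom_ext ht⟩⟩

end ModuleCat

theorem stmt_18_general (k : Type u) [CommRing k] [Small.{w} k] (G : Type v) [Group G] [Finite G]
    (M : Type w) [AddCommGroup M] [Module (MonoidAlgebra k G) M] [Module k M]
    [IsScalarTower k (MonoidAlgebra k G) M]
    (hfin : ∃ n, pdLE n (ModuleCat.of (MonoidAlgebra k G) M)) (n : ℕ) :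
    pdLE n (ModuleCat.of (MonoidAlgebra k G) M) ↔ pdLE n (ModuleCat.of k M) := by
  have : Small.{w} (MonoidAlgebra k G) := small_map MonoidAlgebra.coeffEquiv
  have hP (P : ModuleCat.{w} (MonoidAlgebra k G)) (_ : Projective P) :=
    isRelativelyInjective_restrictScalars_of_projective (k := k) P
  have := preservesProjectiveObjects_restrictScalars.{w} k (MonoidAlgebra k G)
  obtain ⟨m, hm⟩ := hfin
  rw [pdLE_iff_hasProjectiveDimensionLE] at hm
  rw [pdLE_iff_hasProjectiveDimensionLE, pdLE_iff_hasProjectiveDimensionLE,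
    ← IsRelativelyInjective.hasProjectiveDimensionLE_obj_iff hP hm]
  let e := restrictScalarsObjIso k (MonoidAlgebra k G) M
  exact ⟨fun _ => hasProjectiveDimensionLT_of_iso e _,
    fun _ => hasProjectiveDimensionLT_of_iso e.symm _⟩

/-- For a finite group `G` and a finitely generated `kG`-module `M` of finite projective
dimension over `kG`, the projective dimensions of `M` over `kG` and over `k` agree. -/
theorem stmt_18 (k : Type) [CommRing k] [IsNoetherianRing k] (G : Type) [Group G]
    [Fintype G] (M : Type) [AddCommGroup M] [Module (MonoidAlgebra k G) M] [Module k M]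
    [IsScalarTower k (MonoidAlgebra k G) M] [Module.Finite (MonoidAlgebra k G) M]
    (hfin : ∃ n, pdLE n (ModuleCat.of (MonoidAlgebra k G) M)) :
    ∀ n : ℕ, pdLE n (ModuleCat.of (MonoidAlgebra k G) M) ↔ pdLE n (ModuleCat.of k M) :=
  stmt_18_general k G M hfin
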